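/- Let r ≥ 3 be an integer and let Q^r ⊂ ℝ² be the convex hull of the points P^r_0 = (0, r(r−1)²/8) and P^r_l = ( (1/3)·∑_{i=1}^{l} C(r_i^{(l)}, 2), (1/4)·∑_{i=1}^{l} r_i^{(l)}·C(r_i^{(l)} − 1, 2) ) for l = 1, …, r, where r_i^{(l)} = ⌊(r+i−1)/l⌋. Then for every point (x, y) ∈ Q^r with both coordinates rational, there exists a nonempty finite simple r-regular graph G with d₃(G) = x and d₄(G) = y. -/

import Mathlib

open SimpleGraph

/-- The number of `k`-cycle subgraphs of `G`: each `k`-cycle subgraph corresponds to exactly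
`2 * k` rooted closed walks that are cycles of length `k`. -/
noncomputable def cycleCount {V : Type*} (G : SimpleGraph V) (k : ℕ) : ℕ :=
  Nat.card ((x : V) × {p : G.Walk x x // p.IsCycle ∧ p.length = k}) / (2 * k)

/-- The density of `k`-cycles: the number of `k`-cycles divided by the number of vertices. -/
noncomputable def cycleDensity {V : Type*} (G : SimpleGraph V) (k : ℕ) : ℝ :=
  (cycleCount G k : ℝ) / (Nat.card V : ℝ)

/-- A graph is `r`-regular if every vertex has exactly `r` neighbors. -/
def IsRegularGraph {V : Type*} (G : SimpleGraph V) (r : ℕ) : Prop :=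
  ∀ v : V, Nat.card (G.neighborSet v) = r

/-- The point `P^r_l` for `1 ≤ l ≤ r`, built from the balanced partition
`r_i = ⌊(r + i - 1) / l⌋`, `i = 1, …, l` (here `i` runs over `0, …, l-1`, so `r_i = (r+i)/l`). -/
noncomputable def extremePoint (r l : ℕ) : ℝ × ℝ :=
  ((1 / 3 : ℝ) * ∑ i ∈ Finset.range l, (((r + i) / l).choose 2 : ℝ),
   (1 / 4 : ℝ) * ∑ i ∈ Finset.range l, (((r + i) / l * (((r + i) / l - 1).choose 2) : ℕ) : ℝ))

/-- The vertex set of the polygon `Q^r`: the point `P^r_0 = (0, r(r-1)²/8)` together with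
the points `P^r_l`, `l = 1, …, r`. -/
noncomputable def extremeSet (r : ℕ) : Set (ℝ × ℝ) :=
  insert ((0 : ℝ), (r : ℝ) * ((r : ℝ) - 1) ^ 2 / 8)
    {p : ℝ × ℝ | ∃ l : ℕ, 1 ≤ l ∧ l ≤ r ∧ p = extremePoint r l}

/-!
The densities of a disjoint union are weighted averages, so the pairs of triangle and quadrilateral
densities of `r`-regular graphs form a convex set over `ℚ`. A rational point of the real convex hull
of rational points is already in their rational convex hull, because a linear system over `ℚ` with a
real solution has a rational one. It remains to realize the vertices of `Q^r`. For `P^r_0` take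
`K_{r,r}`. For `P^r_l` take a graph in which every vertex `v` is in `l` cliques, with `r_i + 1`
vertices for the `i`-th of them, and every cycle of length at most four is inside one clique. Such a
graph is a cover of the Hamming graph with sides `r_i + 1`: by recording the parity of the number of
times each incidence of a point with a line is traversed, the cover destroys the quadrilaterals that
alternate between two directions.
-/

/-! ### Rational points of convex hulls -/

theorem exists_solution_of_exists_algebra_solution {K A ι κ : Type*} [Field K] [Ring A]
    [Nontrivial A] [Algebra K A] [Fintype ι] (c : κ → ι → K) (b : κ → K) (w : ι → A)
    (hw : ∀ k, ∑ i, c k i • w i = algebraMap K A (b k)) :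
    ∃ q : ι → K, ∀ k, ∑ i, c k i * q i = b k := by
  obtain ⟨φ, hφ⟩ := (Algebra.linearMap K A).exists_leftInverse_of_injective
    (LinearMap.ker_eq_bot.2 (algebraMap K A).injective)
  have map_algebraMap (x : K) : φ (algebraMap K A x) = x := LinearMap.congr_fun hφ x
  refine ⟨fun i => φ (w i), fun k => ?_⟩
  rw [← map_algebraMap (b k), ← hw k, map_sum]
  simp only [map_smul, smul_eq_mul]

/-- The inclusion of the rational points into the plane `𝕜 × 𝕜`. -/
def ratPoint (𝕜 : Type*) [Field 𝕜] (p : ℚ × ℚ) : 𝕜 × 𝕜 := (p.1, p.2)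

theorem sum_smul_ratPoint_eq_iff {𝕜 ι : Type*} [Field 𝕜] [Fintype ι] (w : ι → 𝕜)
    (z : ι → ℚ × ℚ) (p : ℚ × ℚ) :
    ∑ i, w i • ratPoint 𝕜 (z i) = ratPoint 𝕜 p ↔
      ∑ i, w i * (z i).1 = p.1 ∧ ∑ i, w i * (z i).2 = p.2 := by
  simp [ratPoint, Prod.ext_iff, Prod.fst_sum, Prod.snd_sum]

theorem mem_convexHull_of_ratPoint_mem_convexHull {𝕜 : Type*} [Field 𝕜] [LinearOrder 𝕜]
    [IsStrictOrderedRing 𝕜] {S : Set (ℚ × ℚ)} {p : ℚ × ℚ}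
    (hp : ratPoint 𝕜 p ∈ convexHull 𝕜 (ratPoint 𝕜 '' S)) : p ∈ convexHull ℚ S := by
  obtain ⟨ι, _, z, w, hz, hind, hw0, hw1, hw⟩ := eq_pos_convex_span_of_mem_convexHull hp
  choose s hsS hs using fun i => hz (Set.mem_range_self i)
  obtain rfl : ratPoint 𝕜 ∘ s = z := funext hs
  have hwp := (sum_smul_ratPoint_eq_iff w s p).1 hw
  obtain ⟨q, hq⟩ := exists_solution_of_exists_algebra_solution
    ![fun _ => 1, fun i => (s i).1, fun i => (s i).2] ![1, p.1, p.2] w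
    (by simpa [Fin.forall_fin_succ, hw1, Rat.smul_def, mul_comm] using hwp)
  obtain ⟨hq1, hqx, hqy⟩ :
      ∑ i, q i = 1 ∧ ∑ i, q i * (s i).1 = p.1 ∧ ∑ i, q i * (s i).2 = p.2 := by
    simpa [Fin.forall_fin_succ, mul_comm] using hq
  have hq1' : ∑ i, (q i : 𝕜) = 1 := by exact_mod_cast hq1
  have hqp : ∑ i, (q i : 𝕜) • ratPoint 𝕜 (s i) = ratPoint 𝕜 p :=
    (sum_smul_ratPoint_eq_iff _ s p).2 ⟨by exact_mod_cast hqx, by exact_mod_cast hqy⟩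
  have hwq (i : ι) : w i = q i := by
    refine sub_eq_zero.1 <| affineIndependent_iff.1 hind Finset.univ (fun i => w i - q i) ?_ ?_ i
      (Finset.mem_univ i)
    · simp [hw1, hq1']
    · simpa [sub_smul, hqp, sub_eq_zero] using hw
  have hq0 (i : ι) : 0 ≤ q i := by exact_mod_cast hwq i ▸ (hw0 i).le
  refine mem_convexHull_of_exists_fintype q s hq0 hq1 hsS ?_
  exact (sum_smul_ratPoint_eq_iff q s p).2 ⟨hqx, hqy⟩

/-! ### Densities of rooted cycles -/

section RootedCycles

variable {V W : Type*} {G : SimpleGraph V} {H : SimpleGraph W}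

/-- The `k`-cycles of `G` with a chosen starting vertex `v` and a chosen direction: a `k`-cycle
subgraph gives `2 * k` of them, spread over its `k` vertices. -/
abbrev RootedCycle (G : SimpleGraph V) (k : ℕ) (v : V) : Type _ :=
  {p : G.Walk v v // p.IsCycle ∧ p.length = k}

theorem finite_rootedCycle [Finite V] (G : SimpleGraph V) (k : ℕ) (v : V) :
    Finite (RootedCycle G k v) := by
  classical
  have := Fintype.ofFinite V
  exact Finite.of_injective (β := {p : G.Walk v v // p.length = k}) (fun p => ⟨p, p.2.2⟩)
    fun p q h => Subtype.ext (Subtype.mk.inj h)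

/-- The average number of rooted `k`-cycles at a vertex of `G`. It is `2 * k` times the density of
`k`-cycles, but unlike `cycleDensity` it involves no division rounded down. -/
noncomputable def rootedCycleDensity (G : SimpleGraph V) (k : ℕ) : ℚ :=
  Nat.card ((v : V) × RootedCycle G k v) / Nat.card V

theorem card_sigma_rootedCycle [Fintype V] (G : SimpleGraph V) (k : ℕ) :
    Nat.card ((v : V) × RootedCycle G k v) = ∑ v, Nat.card (RootedCycle G k v) :=
  have := finite_rootedCycle G k
  Nat.card_sigma

theorem card_sigma_rootedCycle_eq_mul [Finite V] (G : SimpleGraph V) (k : ℕ) :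
    (Nat.card ((v : V) × RootedCycle G k v) : ℚ) = rootedCycleDensity G k * Nat.card V := by
  cases isEmpty_or_nonempty V
  · simp
  · exact (div_mul_cancel₀ _ (Nat.cast_ne_zero.2 Nat.card_pos.ne')).symm

theorem rootedCycleDensity_eq_of_forall_card_eq [Finite V] [Nonempty V] {k c : ℕ}
    (h : ∀ v, Nat.card (RootedCycle G k v) = c) : rootedCycleDensity G k = c := by
  have := Fintype.ofFinite V
  rw [rootedCycleDensity, card_sigma_rootedCycle, Nat.card_eq_fintype_card]
  simp [h]

/-- The image of the embedding `f` is a union of connected components. -/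
def HasClosedRange (f : G ↪g H) : Prop :=
  ∀ ⦃a y⦄, H.Adj (f a) y → y ∈ Set.range f

namespace HasClosedRange

variable {f : G ↪g H} (hf : HasClosedRange f)
include hf

theorem card_neighborSet (a : V) :
    Nat.card (H.neighborSet (f a)) = Nat.card (G.neighborSet a) := by
  have : H.neighborSet (f a) = f '' G.neighborSet a := by
    ext y
    refine ⟨fun h => ?_, ?_⟩
    · obtain ⟨b, rfl⟩ := hf h
      exact ⟨b, f.map_adj_iff.1 h, rfl⟩
    · rintro ⟨b, h, rfl⟩
      exact f.map_adj_iff.2 h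
  rw [this, Nat.card_image_of_injective f.injective]

theorem exists_walk_map_eq {a b : V} (p : H.Walk (f a) (f b)) :
    ∃ q : G.Walk a b, q.map f.toHom = p := by
  suffices ∀ {x y : W} (p : H.Walk x y) {a b : V} (ha : f a = x) (hb : f b = y),
      ∃ q : G.Walk a b, q.map f.toHom = p.copy ha.symm hb.symm from this p rfl rfl
  intro x y p
  induction p with
  | nil =>
    rintro a b rfl hb
    obtain rfl := f.injective hb
    exact ⟨.nil, rfl⟩
  | cons h p ih =>
    rintro a b rfl rfl
    obtain ⟨c, rfl⟩ := hf h
    obtain ⟨q, hq⟩ := ih rfl rfl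
    exact ⟨.cons (f.map_adj_iff.1 h) q, congrArg (Walk.cons h) hq⟩

theorem card_rootedCycle (k : ℕ) (a : V) :
    Nat.card (RootedCycle H k (f a)) = Nat.card (RootedCycle G k a) := by
  symm
  refine Nat.card_eq_of_bijective
    (fun p => ⟨p.1.map f.toHom, p.2.1.map f.injective, (Walk.length_map ..).trans p.2.2⟩) ⟨?_, ?_⟩
  · intro p q h
    exact Subtype.ext (Walk.map_injective_of_injective f.injective a a (congrArg Subtype.val h))
  · rintro ⟨p, hp, hk⟩
    obtain ⟨q, rfl⟩ := hf.exists_walk_map_eq p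
    exact ⟨⟨q, (Walk.isCycle_map_iff_of_injective f.injective).1 hp,
      (Walk.length_map ..).symm.trans hk⟩, rfl⟩

end HasClosedRange

theorem hasClosedRange_sumInl (G : SimpleGraph V) (H : SimpleGraph W) :
    HasClosedRange (Embedding.sumInl : G ↪g G ⊕g H) := by
  rintro a (b | b) h
  · exact ⟨b, rfl⟩
  · cases h

theorem hasClosedRange_sumInr (G : SimpleGraph V) (H : SimpleGraph W) :
    HasClosedRange (Embedding.sumInr : H ↪g G ⊕g H) := by
  rintro a (b | b) h
  · cases h
  · exact ⟨b, rfl⟩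

theorem hasClosedRange_boxProdLeft_bot (G : SimpleGraph V) (w : W) :
    HasClosedRange (G.boxProdLeft (⊥ : SimpleGraph W) w) := by
  rintro a ⟨b, w'⟩ h
  obtain ⟨-, rfl⟩ : G.Adj a b ∧ w = w' := by simpa using h
  exact ⟨b, rfl⟩

theorem rootedCycleDensity_sum [Finite V] [Finite W] (G : SimpleGraph V) (H : SimpleGraph W)
    (k : ℕ) :
    rootedCycleDensity (G ⊕g H) k =
      (Nat.card V * rootedCycleDensity G k + Nat.card W * rootedCycleDensity H k) /
        (Nat.card V + Nat.card W) := by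
  have := Fintype.ofFinite V
  have := Fintype.ofFinite W
  have hcount : Nat.card ((v : V ⊕ W) × RootedCycle (G ⊕g H) k v) =
      Nat.card ((v : V) × RootedCycle G k v) + Nat.card ((w : W) × RootedCycle H k w) := by
    simp only [card_sigma_rootedCycle, Fintype.sum_sum_type]
    congr! 2 with v _ w
    exacts [(hasClosedRange_sumInl G H).card_rootedCycle k v,
      (hasClosedRange_sumInr G H).card_rootedCycle k w]
  rw [rootedCycleDensity, hcount, Nat.card_sum, Nat.cast_add, Nat.cast_add,
    card_sigma_rootedCycle_eq_mul, card_sigma_rootedCycle_eq_mul, mul_comm,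
    mul_comm (rootedCycleDensity H k)]

theorem card_sigma_rootedCycle_boxProd_bot [Finite V] [Finite W] (G : SimpleGraph V) (k : ℕ) :
    Nat.card ((x : V × W) × RootedCycle (G □ (⊥ : SimpleGraph W)) k x) =
      Nat.card W * Nat.card ((v : V) × RootedCycle G k v) := by
  have := Fintype.ofFinite V
  have := Fintype.ofFinite W
  have hcard (v : V) (w : W) : Nat.card (RootedCycle (G □ (⊥ : SimpleGraph W)) k (v, w)) =
      Nat.card (RootedCycle G k v) := (hasClosedRange_boxProdLeft_bot G w).card_rootedCycle k v
  simp only [card_sigma_rootedCycle, Fintype.sum_prod_type, hcard, Finset.sum_const,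
    Finset.card_univ, smul_eq_mul, Finset.mul_sum, Nat.card_eq_fintype_card]

theorem rootedCycleDensity_boxProd_bot [Finite V] [Finite W] [Nonempty W] (G : SimpleGraph V)
    (k : ℕ) : rootedCycleDensity (G □ (⊥ : SimpleGraph W)) k = rootedCycleDensity G k := by
  rw [rootedCycleDensity, card_sigma_rootedCycle_boxProd_bot, mul_comm, Nat.card_prod,
    Nat.cast_mul, Nat.cast_mul, mul_div_mul_right _ _ (Nat.cast_ne_zero.2 Nat.card_pos.ne')]
  rfl

theorem isRegularGraph_sum {r : ℕ} (hG : IsRegularGraph G r) (hH : IsRegularGraph H r) :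
    IsRegularGraph (G ⊕g H) r
  | .inl v => ((hasClosedRange_sumInl G H).card_neighborSet v).trans (hG v)
  | .inr w => ((hasClosedRange_sumInr G H).card_neighborSet w).trans (hH w)

theorem isRegularGraph_boxProd_bot {r : ℕ} (hG : IsRegularGraph G r) :
    IsRegularGraph (G □ (⊥ : SimpleGraph W)) r := fun x =>
  ((hasClosedRange_boxProdLeft_bot G x.2).card_neighborSet x.1).trans (hG x.1)

theorem cycleDensity_boxProd_bot [Finite V] [Finite W] [Nonempty W] (G : SimpleGraph V) {k : ℕ}
    (hk : 2 * k ∣ Nat.card W) :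
    cycleDensity (G □ (⊥ : SimpleGraph W)) k = rootedCycleDensity G k / (2 * k) := by
  have hk0 : (2 * k : ℝ) ≠ 0 := by
    exact_mod_cast (Nat.pos_of_dvd_of_pos hk Nat.card_pos).ne'
  rw [← rootedCycleDensity_boxProd_bot (W := W), cycleDensity, cycleCount,
    card_sigma_rootedCycle_boxProd_bot, Nat.cast_div (hk.mul_right _) (mod_cast hk0),
    ← card_sigma_rootedCycle_boxProd_bot]
  simp [rootedCycleDensity, div_right_comm]

end RootedCycles

/-- The families of rooted cycle densities, indexed by the cycle length, of the nonempty finite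
`r`-regular graphs. -/
def regularProfiles (r : ℕ) : Set (ℕ → ℚ) :=
  {ρ | ∃ (V : Type) (G : SimpleGraph V), Finite V ∧ Nonempty V ∧ IsRegularGraph G r ∧
    rootedCycleDensity G = ρ}

theorem exists_natCast_div_add_eq {a b : ℚ} (ha : 0 < a) (hb : 0 < b) (hab : a + b = 1) :
    ∃ m n : ℕ, m ≠ 0 ∧ n ≠ 0 ∧ a = m / (m + n) ∧ b = n / (m + n) := by
  obtain ⟨m, n, hm, hn, hmn⟩ : ∃ m n : ℕ, m ≠ 0 ∧ n ≠ 0 ∧ (m : ℚ) * b = n * a := by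
    lift a to ℚ≥0 using ha.le
    lift b to ℚ≥0 using hb.le
    norm_cast at ha hb ⊢
    refine ⟨a.num * b.den, b.num * a.den, by simp [ha.ne'], by simp [hb.ne'], ?_⟩
    push_cast
    rw [mul_assoc, mul_assoc, NNRat.den_mul_eq_num, NNRat.den_mul_eq_num, mul_comm]
  have hpos : (0 : ℚ) < m + n := by positivity
  refine ⟨m, n, hm, hn, ?_, ?_⟩ <;> rw [eq_div_iff hpos.ne']
  · linear_combination m * hab - hmn
  · linear_combination n * hab + hmn

theorem convex_regularProfiles (r : ℕ) : Convex ℚ (regularProfiles r) := by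
  rw [convex_iff_forall_pos]
  rintro _ ⟨V, G, _, _, hG, rfl⟩ _ ⟨W, H, _, _, hH, rfl⟩ a b ha hb hab
  obtain ⟨m, n, hm, hn, rfl, rfl⟩ := exists_natCast_div_add_eq ha hb hab
  have : NeZero (m * Nat.card W) := ⟨mul_ne_zero hm Nat.card_pos.ne'⟩
  have : NeZero (n * Nat.card V) := ⟨mul_ne_zero hn Nat.card_pos.ne'⟩
  refine ⟨_, (G □ (⊥ : SimpleGraph (Fin (m * Nat.card W)))) ⊕g
    (H □ (⊥ : SimpleGraph (Fin (n * Nat.card V)))), inferInstance, inferInstance,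
    isRegularGraph_sum (isRegularGraph_boxProd_bot hG) (isRegularGraph_boxProd_bot hH), ?_⟩
  ext k
  have hV : (Nat.card V : ℚ) ≠ 0 := Nat.cast_ne_zero.2 Nat.card_pos.ne'
  have hW : (Nat.card W : ℚ) ≠ 0 := Nat.cast_ne_zero.2 Nat.card_pos.ne'
  simp only [rootedCycleDensity_sum, rootedCycleDensity_boxProd_bot, Nat.card_prod, Nat.card_fin,
    Nat.cast_mul, Pi.add_apply, Pi.smul_apply, smul_eq_mul]
  field_simp

section ShortCycles

variable {V : Type*}

/-- The second and third vertices of the rooted triangles at `v`. -/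
def rootedTriangles (G : SimpleGraph V) (v : V) : Set (Fin 2 → V) :=
  {f | G.Adj v (f 0) ∧ G.Adj (f 0) (f 1) ∧ G.Adj (f 1) v}

/-- The second, third and fourth vertices of the rooted quadrilaterals at `v`. -/
def rootedQuads (G : SimpleGraph V) (v : V) : Set (Fin 3 → V) :=
  {f | G.Adj v (f 0) ∧ G.Adj (f 0) (f 1) ∧ G.Adj (f 1) (f 2) ∧ G.Adj (f 2) v ∧
    v ≠ f 1 ∧ f 0 ≠ f 2}

theorem card_rootedCycle_three (G : SimpleGraph V) (v : V) :
    Nat.card (RootedCycle G 3 v) = Nat.card (rootedTriangles G v) := by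
  symm
  refine Nat.card_eq_of_bijective
    (fun f => ⟨.cons f.2.1 (.cons f.2.2.1 (.cons f.2.2.2 .nil)), ?_, rfl⟩) ⟨?_, ?_⟩
  · obtain ⟨f, h₀, h₁, h₂⟩ := f
    simp [Walk.cons_isCycle_iff, Walk.cons_isPath_iff, h₀.ne', h₁.ne, h₂.ne, h₂.ne']
  · intro f g h
    have hsupp := congrArg (fun p => p.1.support) h
    ext k
    fin_cases k <;> simp_all
  · rintro ⟨p, hp, hl⟩
    match p, hp, hl with
    | .cons (v := b) h₀ (.cons (v := c) h₁ (.cons h₂ .nil)), _, _ =>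
      exact ⟨⟨![b, c], h₀, h₁, h₂⟩, rfl⟩

theorem card_rootedCycle_four (G : SimpleGraph V) (v : V) :
    Nat.card (RootedCycle G 4 v) = Nat.card (rootedQuads G v) := by
  symm
  refine Nat.card_eq_of_bijective
    (fun f => ⟨.cons f.2.1 (.cons f.2.2.1 (.cons f.2.2.2.1 (.cons f.2.2.2.2.1 .nil))), ?_, rfl⟩)
    ⟨?_, ?_⟩
  · obtain ⟨f, h₀, h₁, h₂, h₃, hne, hne'⟩ := f
    simp [Walk.cons_isCycle_iff, Walk.cons_isPath_iff, h₀.ne', h₁.ne, h₂.ne, h₃.ne, h₃.ne',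
      hne, hne.symm, hne']
  · intro f g h
    have hsupp := congrArg (fun p => p.1.support) h
    ext k
    fin_cases k <;> simp_all
  · rintro ⟨p, hp, hl⟩
    match p, hp, hl with
    | .cons (v := b) h₀ (.cons (v := c) h₁ (.cons (v := d) h₂ (.cons h₃ .nil))), hp, _ =>
      have hnodup : [b, c, d, v].Nodup := hp.support_nodup
      refine ⟨⟨![b, c, d], h₀, h₁, h₂, h₃, ?_, ?_⟩, rfl⟩
      · rintro rfl
        simp at hnodup
      · rintro (rfl : b = d)
        simp at hnodup

end ShortCycles

/-! ### Block systems -/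

theorem card_injective_mem_eq_sum_descFactorial {V ι : Type*} [Finite V] [Fintype ι]
    {P : ι → Set V} (hP : Pairwise (Function.onFun Disjoint P)) {n : ℕ} (hn : n ≠ 0) :
    Nat.card {f : Fin n → V | Function.Injective f ∧ ∃ i, ∀ k, f k ∈ P i} =
      ∑ i, (Nat.card (P i)).descFactorial n := by
  classical
  have := Fintype.ofFinite V
  have hemb (i : ι) : Nat.card (Fin n ↪ P i) = (Nat.card (P i)).descFactorial n := by
    simp [Nat.card_eq_fintype_card, Fintype.card_embedding_eq]
  simp only [← hemb, ← Nat.card_sigma]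
  symm
  refine Nat.card_eq_of_bijective
    (fun e => ⟨fun k => e.2 k, Subtype.val_injective.comp e.2.injective, e.1, fun k => (e.2 k).2⟩)
    ⟨?_, ?_⟩
  · rintro ⟨i, e⟩ ⟨j, e'⟩ h
    have hval (k : Fin n) : (e k : V) = e' k := congrFun (congrArg Subtype.val h) k
    obtain rfl : i = j := by
      by_contra hij
      exact Set.disjoint_left.1 (hP hij) (e ⟨0, hn.bot_lt⟩).2 (hval _ ▸ (e' _).2)
    congr 1
    ext k
    exact hval k
  · rintro ⟨f, hf, i, hi⟩
    exact ⟨⟨i, fun k => ⟨f k, hi k⟩, fun k l h => hf (congrArg Subtype.val h)⟩, rfl⟩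

/-- A family of equivalence relations whose classes, called blocks, contain all short cycles: a
cyclic sequence of two, three or four points in which consecutive points are in a common block, for
relations that differ from one step to the next, has two consecutive points that are equal. -/
structure IsBlockSystem {V ι : Type*} (S : ι → Setoid V) : Prop where
  two : ∀ {i j v w}, i ≠ j → S i v w → S j w v → v = w
  three : ∀ {i j k u v w}, i ≠ j → j ≠ k → k ≠ i → S i u v → S j v w → S k w u → u = v
  four : ∀ {i j k l u v w x}, i ≠ j → j ≠ k → k ≠ l → l ≠ i → S i u v → S j v w → S k w x →
    S l x u → v ≠ w → u = v

/-- The graph in which every block of `S` is a clique. -/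
def blockGraph {V ι : Type*} (S : ι → Setoid V) : SimpleGraph V where
  Adj v w := v ≠ w ∧ ∃ i, S i v w
  symm := ⟨fun _ _ ⟨hne, i, h⟩ => ⟨hne.symm, i, (S i).symm h⟩⟩
  loopless := ⟨fun _ h => h.1 rfl⟩

/-- The points other than `v` in the block of `S i` through `v`. -/
def puncturedBlock {V ι : Type*} (S : ι → Setoid V) (v : V) (i : ι) : Set V :=
  {w | v ≠ w ∧ S i v w}

theorem blockGraph_adj_of_mem_puncturedBlock {V ι κ : Type*} {S : ι → Setoid V} {f : κ → V} {v : V}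
    {i : ι} (hf : Function.Injective f) (hi : ∀ k, f k ∈ puncturedBlock S v i) ⦃k l : κ⦄
    (hkl : k ≠ l) : (blockGraph S).Adj (f k) (f l) :=
  ⟨hf.ne hkl, i, (S i).trans ((S i).symm (hi k).2) (hi l).2⟩

namespace IsBlockSystem

variable {V ι : Type*} {S : ι → Setoid V} (hS : IsBlockSystem S)
include hS

theorem pairwise_disjoint_puncturedBlock (v : V) :
    Pairwise (Function.onFun Disjoint (puncturedBlock S v)) := fun _ j hij =>
  Set.disjoint_left.2 fun _ hi hj => hi.1 (hS.two hij hi.2 ((S j).symm hj.2))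

theorem eq_of_rel {i j : ι} {v w : V} (hne : v ≠ w) (hi : S i v w) (hj : S j w v) : i = j := by
  by_contra hij
  exact hne (hS.two hij hi hj)

theorem eq_of_triangle {i j k : ι} {u v w : V} (huv : u ≠ v) (hvw : v ≠ w) (hwu : w ≠ u)
    (hi : S i u v) (hj : S j v w) (hk : S k w u) : i = j ∧ j = k := by
  by_cases hij : i = j
  · subst hij
    exact ⟨rfl, hS.eq_of_rel hwu.symm ((S i).trans hi hj) hk⟩
  by_cases hjk : j = k
  · subst hjk
    exact ⟨hS.eq_of_rel huv hi ((S j).trans hj hk), rfl⟩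
  by_cases hki : k = i
  · subst hki
    have := hS.eq_of_rel hvw hj ((S k).trans hk hi)
    exact absurd this hjk
  · exact absurd (hS.three hij hjk hki hi hj hk) huv

theorem eq_of_quad {i j k l : ι} {u v w x : V} (huv : u ≠ v) (hvw : v ≠ w) (hwx : w ≠ x)
    (hxu : x ≠ u) (huw : u ≠ w) (hvx : v ≠ x) (hi : S i u v) (hj : S j v w) (hk : S k w x)
    (hl : S l x u) : i = j ∧ j = k ∧ k = l := by
  by_cases hij : i = j
  · subst hij
    have := hS.eq_of_triangle huw hwx hxu ((S i).trans hi hj) hk hl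
    exact ⟨rfl, this⟩
  by_cases hjk : j = k
  · subst hjk
    have := hS.eq_of_triangle huv hvx hxu hi ((S j).trans hj hk) hl
    exact ⟨this.1, rfl, this.2⟩
  by_cases hkl : k = l
  · subst hkl
    have := hS.eq_of_triangle huv hvw huw.symm hi hj ((S k).trans hk hl)
    exact ⟨this.1, this.2, rfl⟩
  by_cases hli : l = i
  · subst hli
    have := hS.eq_of_triangle hvw hwx hvx.symm hj hk ((S l).trans hl hi)
    exact absurd this.1 hjk
  · exact absurd (hS.four hij hjk hkl hli hi hj hk hl hvw) huv

theorem rootedTriangles_blockGraph (v : V) :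
    rootedTriangles (blockGraph S) v =
      {f | Function.Injective f ∧ ∃ i, ∀ k, f k ∈ puncturedBlock S v i} := by
  ext f
  constructor
  · rintro ⟨⟨hne₀, i, h₀⟩, ⟨hne₁, j, h₁⟩, hne₂, k, h₂⟩
    obtain ⟨rfl, rfl⟩ := hS.eq_of_triangle hne₀ hne₁ hne₂ h₀ h₁ h₂
    refine ⟨by simp [Function.Injective, Fin.forall_fin_two, hne₁, hne₁.symm], i, ?_⟩
    exact Fin.forall_fin_two.2 ⟨⟨hne₀, h₀⟩, hne₂.symm, (S i).symm h₂⟩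
  · rintro ⟨hf, i, hi⟩
    have hadj := blockGraph_adj_of_mem_puncturedBlock hf hi
    exact ⟨⟨(hi 0).1, i, (hi 0).2⟩, hadj (by decide), (hi 1).1.symm, i, (S i).symm (hi 1).2⟩

theorem rootedQuads_blockGraph (v : V) :
    rootedQuads (blockGraph S) v =
      {f | Function.Injective f ∧ ∃ i, ∀ k, f k ∈ puncturedBlock S v i} := by
  ext f
  constructor
  · rintro ⟨⟨hne₀, i, h₀⟩, ⟨hne₁, j, h₁⟩, ⟨hne₂, k, h₂⟩, ⟨hne₃, l, h₃⟩, hne, hne'⟩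
    obtain ⟨rfl, rfl, rfl⟩ := hS.eq_of_quad hne₀ hne₁ hne₂ hne₃ hne hne' h₀ h₁ h₂ h₃
    refine ⟨by simp [Function.Injective, Fin.forall_fin_succ, hne₁, hne₁.symm, hne₂, hne₂.symm,
      hne', hne'.symm], i, ?_⟩
    simp only [Fin.forall_fin_succ]
    exact ⟨⟨hne₀, h₀⟩, ⟨hne, (S i).trans h₀ h₁⟩, ⟨hne₃.symm, (S i).symm h₃⟩, nofun⟩
  · rintro ⟨hf, i, hi⟩
    have hadj := blockGraph_adj_of_mem_puncturedBlock hf hi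
    exact ⟨⟨(hi 0).1, i, (hi 0).2⟩, hadj (by decide), hadj (by decide),
      ⟨(hi 2).1.symm, i, (S i).symm (hi 2).2⟩, (hi 1).1, hf.ne (by decide)⟩

theorem card_neighborSet_blockGraph [Finite V] [Fintype ι] (v : V) :
    Nat.card ((blockGraph S).neighborSet v) = ∑ i, Nat.card (puncturedBlock S v i) := by
  have hunion : (blockGraph S).neighborSet v = ⋃ i, puncturedBlock S v i := by
    ext w
    simp [blockGraph, puncturedBlock]
  rw [hunion, Nat.card_congr (Set.unionEqSigmaOfDisjoint (hS.pairwise_disjoint_puncturedBlock v)),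
    Nat.card_sigma]

theorem card_rootedCycle_three_blockGraph [Finite V] [Fintype ι] (v : V) :
    Nat.card (RootedCycle (blockGraph S) 3 v) =
      ∑ i, (Nat.card (puncturedBlock S v i)).descFactorial 2 := by
  rw [card_rootedCycle_three, hS.rootedTriangles_blockGraph]
  exact card_injective_mem_eq_sum_descFactorial (hS.pairwise_disjoint_puncturedBlock v) two_ne_zero

theorem card_rootedCycle_four_blockGraph [Finite V] [Fintype ι] (v : V) :
    Nat.card (RootedCycle (blockGraph S) 4 v) =
      ∑ i, (Nat.card (puncturedBlock S v i)).descFactorial 3 := by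
  rw [card_rootedCycle_four, hS.rootedQuads_blockGraph]
  exact card_injective_mem_eq_sum_descFactorial (hS.pairwise_disjoint_puncturedBlock v)
    three_ne_zero

end IsBlockSystem

/-! ### The cover of the Hamming space -/

section HammingCover

open scoped symmDiff

/-- The points of a cover of the Hamming space `∏ i, α i`. A flag `(i, u)` is a point `u` of the
Hamming space with the line in direction `i` through it, and the second component of a point of the
cover records which flags have been traversed an odd number of times. -/
abbrev HammingCover {ι : Type*} (α : ι → Type*) : Type _ :=
  (∀ i, α i) × Set (ι × ∀ i, α i)

variable {ι : Type*} {α : ι → Type*}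

/-- Two points of the cover are in the same block in direction `i` if their projections are on the
same line in direction `i`, and their labels differ exactly by the two flags traversed in moving
from one projection to the line and from the line to the other projection. -/
def hammingBlock (α : ι → Type*) (i : ι) : Setoid (HammingCover α) :=
  Setoid.ker fun v => ((fun j : {j // j ≠ i} => v.1 j), v.2 ∆ {(i, v.1)})

variable {i j : ι} {v w : HammingCover α}

theorem hammingBlock_iff :
    hammingBlock α i v w ↔
      (∀ j ≠ i, v.1 j = w.1 j) ∧ v.2 ∆ {(i, v.1)} = w.2 ∆ {(i, w.1)} := by
  refine Prod.ext_iff.trans (and_congr_left' ?_)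
  simp [funext_iff]

theorem eq_of_hammingBlock (h : hammingBlock α i v w) (hi : v.1 i = w.1 i) : v = w := by
  obtain ⟨hoff, hlabel⟩ := hammingBlock_iff.1 h
  have hfst : v.1 = w.1 := by
    ext j
    rcases eq_or_ne j i with rfl | hj
    exacts [hi, hoff j hj]
  rw [hfst] at hlabel
  exact Prod.ext hfst (symmDiff_left_injective _ hlabel)

theorem mem_snd_iff_of_hammingBlock (h : hammingBlock α i v w) {p : ι × ∀ i, α i}
    (hv : p ≠ (i, v.1)) (hw : p ≠ (i, w.1)) : p ∈ v.2 ↔ p ∈ w.2 := by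
  simpa [Set.mem_symmDiff, hv, hw] using Set.ext_iff.1 (hammingBlock_iff.1 h).2 p

theorem mem_snd_iff_notMem_of_hammingBlock (h : hammingBlock α i v w) (hi : v.1 i ≠ w.1 i) :
    (i, w.1) ∈ v.2 ↔ (i, w.1) ∉ w.2 := by
  have hne : w.1 ≠ v.1 := fun h => hi (congrFun h i).symm
  simpa [Set.mem_symmDiff, hne] using Set.ext_iff.1 (hammingBlock_iff.1 h).2 (i, w.1)

theorem eq_of_hammingBlock_quad {u x : HammingCover α} (hij : i ≠ j) (huv : hammingBlock α i u v)
    (hvw : hammingBlock α j v w) (hwx : hammingBlock α i w x) (hxu : hammingBlock α j x u)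
    (hne : v ≠ w) : u = v := by
  by_contra huv'
  have hi : u.1 i ≠ v.1 i := fun h => huv' (eq_of_hammingBlock huv h)
  have hj : v.1 j ≠ w.1 j := fun h => hne (eq_of_hammingBlock hvw h)
  have hxj : w.1 j = x.1 j := (hammingBlock_iff.1 hwx).1 j hij.symm
  have hvw' : v.1 ≠ w.1 := fun h => hj (congrFun h j)
  have hvx' : v.1 ≠ x.1 := fun h => hj ((congrFun h j).trans hxj.symm)
  -- The flag `(i, v.1)` is traversed only in the step from `u` to `v`.
  have h₁ := mem_snd_iff_notMem_of_hammingBlock huv hi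
  have h₂ := mem_snd_iff_of_hammingBlock hvw (p := (i, v.1)) (by simp [hij]) (by simp [hij])
  have h₃ := mem_snd_iff_of_hammingBlock hwx (p := (i, v.1)) (by simp [hvw']) (by simp [hvx'])
  have h₄ := mem_snd_iff_of_hammingBlock hxu (p := (i, v.1)) (by simp [hij]) (by simp [hij])
  tauto

theorem isBlockSystem_hammingBlock (α : ι → Type*) : IsBlockSystem (hammingBlock α) where
  two {i j v w} hij hvw hwv :=
    eq_of_hammingBlock hvw ((hammingBlock_iff.1 hwv).1 i hij).symm
  three {i j k u v w} hij _ hki huv hvw hwu :=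
    eq_of_hammingBlock huv <| (((hammingBlock_iff.1 hvw).1 i hij).trans
      ((hammingBlock_iff.1 hwu).1 i hki.symm)).symm
  four {i j k l u v w x} hij hjk hkl hli huv hvw hwx hxu hne := by
    have hvw' := (hammingBlock_iff.1 hvw).1
    have hwx' := (hammingBlock_iff.1 hwx).1
    have hxu' := (hammingBlock_iff.1 hxu).1
    have huv' := (hammingBlock_iff.1 huv).1
    by_cases hik : i = k
    · subst hik
      by_cases hjl : j = l
      · subst hjl
        exact eq_of_hammingBlock_quad hij huv hvw hwx hxu hne
      · refine absurd (eq_of_hammingBlock hvw ?_) hne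
        rw [hwx' j hjk, hxu' j hjl, huv' j hij.symm]
    · refine eq_of_hammingBlock huv ?_
      rw [hvw' i hij, hwx' i hik, hxu' i hli.symm]

theorem card_puncturedBlock_hammingBlock (v : HammingCover α) (i : ι) :
    Nat.card (puncturedBlock (hammingBlock α) v i) = Nat.card (α i) - 1 := by
  classical
  have hcompl : Nat.card ({v.1 i}ᶜ : Set (α i)) = Nat.card (α i) - 1 := by
    rw [Set.compl_eq_univ_sdiff, Nat.card_coe_set_eq,
      Set.ncard_sdiff_singleton_of_mem (Set.mem_univ _), Set.ncard_univ]
  rw [← hcompl]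
  refine Nat.card_eq_of_bijective
    (fun w => ⟨w.1.1 i, fun h => w.2.1 (eq_of_hammingBlock w.2.2 h.symm)⟩) ⟨?_, ?_⟩
  · intro w w' h
    have hww' := (hammingBlock α i).trans ((hammingBlock α i).symm w.2.2) w'.2.2
    exact Subtype.ext (eq_of_hammingBlock hww' (congrArg Subtype.val h))
  · rintro ⟨x, hx⟩
    let u := Function.update v.1 i x
    refine ⟨⟨(u, v.2 ∆ {(i, v.1)} ∆ {(i, u)}), ?_, hammingBlock_iff.2 ⟨?_, ?_⟩⟩, ?_⟩
    · intro h
      exact hx (by simpa [u] using (congrFun (congrArg Prod.fst h) i).symm)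
    · intro j hj
      simp [u, hj]
    · exact (symmDiff_symmDiff_cancel_right _ _).symm
    · simp [u]

end HammingCover

/-! ### The complete bipartite graph -/

theorem isRegularGraph_completeEquipartiteGraph_two (r : ℕ) :
    IsRegularGraph (completeEquipartiteGraph 2 r) r := fun v => by
  rw [Nat.card_eq_fintype_card, card_neighborSet_eq_degree, degree_completeEquipartiteGraph]
  exact one_mul r

theorem card_rootedCycle_three_completeEquipartiteGraph_two (r : ℕ) (v : Fin 2 × Fin r) :
    Nat.card (RootedCycle (completeEquipartiteGraph 2 r) 3 v) = 0 := by
  rw [Nat.card_eq_zero]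
  refine .inl ⟨fun p => ?_⟩
  have heven := two_colorable_iff_forall_loop_even.1 completeEquipartiteGraph_colorable v p.1
  rw [p.2.2] at heven
  exact absurd heven (by decide)

theorem card_rootedCycle_four_completeEquipartiteGraph_two (r : ℕ) (v : Fin 2 × Fin r) :
    Nat.card (RootedCycle (completeEquipartiteGraph 2 r) 4 v) = r * (r - 1) ^ 2 := by
  have hcard : Nat.card ({b // b ≠ v.2} × (Fin 2 ↪ Fin r)) = r * (r - 1) ^ 2 := by
    simp [Nat.card_eq_fintype_card, Fintype.card_embedding_eq, Nat.descFactorial]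
    ring
  have add_one_ne (s : Fin 2) : s + 1 ≠ s := by omega
  rw [card_rootedCycle_four, ← hcard]
  symm
  refine Nat.card_eq_of_bijective
    (fun p => ⟨![(v.1 + 1, p.2 0), (v.1, p.1), (v.1 + 1, p.2 1)], ?_⟩) ⟨?_, ?_⟩
  · have hb : v ≠ (v.1, p.1.1) := fun h => p.1.2 (congrArg Prod.snd h).symm
    simp [rootedQuads, add_one_ne, (add_one_ne _).symm, hb]
  · rintro ⟨b, e⟩ ⟨b', e'⟩ h
    have hval := congrFun (congrArg Subtype.val h)
    refine Prod.ext (Subtype.ext (congrArg Prod.snd (hval 1))) ?_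
    ext k
    fin_cases k
    exacts [congrArg (fun x => (x.2 : ℕ)) (hval 0), congrArg (fun x => (x.2 : ℕ)) (hval 2)]
  · rintro ⟨f, h₀, h₁, h₂, h₃, hne, hne'⟩
    rw [completeEquipartiteGraph_adj] at h₀ h₁ h₂ h₃
    have hf₀ : (f 0).1 = v.1 + 1 := by omega
    have hf₁ : (f 1).1 = v.1 := by omega
    have hf₂ : (f 2).1 = v.1 + 1 := by omega
    have hb : (f 1).2 ≠ v.2 := fun h => hne (Prod.ext hf₁.symm h.symm)
    have he : (f 0).2 ≠ (f 2).2 := fun h => hne' (Prod.ext (hf₀.trans hf₂.symm) h)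
    refine ⟨(⟨_, hb⟩, ⟨![(f 0).2, (f 2).2], by simpa [Function.Injective, Fin.forall_fin_two,
      he.symm]⟩), Subtype.ext (funext fun k => ?_)⟩
    fin_cases k
    exacts [Prod.ext hf₀.symm rfl, Prod.ext hf₁.symm rfl, Prod.ext hf₂.symm rfl]

/-! ### The vertices of the polygon -/

theorem sum_range_add_div (r : ℕ) {l : ℕ} (hl : 0 < l) :
    ∑ i ∈ Finset.range l, (r + i) / l = r := by
  induction r with
  | zero =>
    refine Finset.sum_eq_zero fun i hi => ?_
    rw [zero_add]
    exact Nat.div_eq_of_lt (Finset.mem_range.1 hi)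
  | succ r ih =>
    have hsucc := Finset.sum_range_succ (fun i => (r + i) / l) l
    rw [Finset.sum_range_succ', Nat.add_div_right r hl, ih] at hsucc
    have hshift (i : ℕ) : (r + 1 + i) / l = (r + (i + 1)) / l := by rw [add_assoc, add_comm 1 i]
    simp only [hshift]
    lia

/-- The pair of triangle and quadrilateral densities determined by a family of rooted cycle
densities, as a linear map. -/
def shortCycleDensities : (ℕ → ℚ) →ₗ[ℚ] ℚ × ℚ :=
  ((1 / 6 : ℚ) • LinearMap.proj 3).prod ((1 / 8 : ℚ) • LinearMap.proj 4)

theorem shortCycleDensities_apply (ρ : ℕ → ℚ) : shortCycleDensities ρ = (ρ 3 / 6, ρ 4 / 8) := by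
  simp [shortCycleDensities, div_eq_inv_mul]

theorem exists_mem_regularProfiles_sum {ι : Type} [Fintype ι] (n : ι → ℕ) :
    ∃ ρ ∈ regularProfiles (∑ i, n i), ρ 3 = (∑ i, (n i).descFactorial 2 : ℕ) ∧
      ρ 4 = (∑ i, (n i).descFactorial 3 : ℕ) := by
  let α (i : ι) : Type := Fin (n i + 1)
  have hS := isBlockSystem_hammingBlock α
  have hcard (v : HammingCover α) (i : ι) :
      Nat.card (puncturedBlock (hammingBlock α) v i) = n i :=
    (card_puncturedBlock_hammingBlock v i).trans (by simp [α])
  refine ⟨_, ⟨_, blockGraph (hammingBlock α), inferInstance, inferInstance, fun v => ?_, rfl⟩,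
    rootedCycleDensity_eq_of_forall_card_eq fun v => ?_,
    rootedCycleDensity_eq_of_forall_card_eq fun v => ?_⟩
  · simp [hS.card_neighborSet_blockGraph, hcard]
  · simp [hS.card_rootedCycle_three_blockGraph, hcard]
  · simp [hS.card_rootedCycle_four_blockGraph, hcard]

theorem exists_mem_regularProfiles_mul_sub_one_sq (r : ℕ) :
    ∃ ρ ∈ regularProfiles r, ρ 3 = 0 ∧ ρ 4 = r * (r - 1) ^ 2 := by
  cases r with
  | zero => simpa using exists_mem_regularProfiles_sum (ι := Empty) nofun
  | succ r =>
    refine ⟨_, ⟨_, completeEquipartiteGraph 2 (r + 1), inferInstance, inferInstance,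
      isRegularGraph_completeEquipartiteGraph_two _, rfl⟩, ?_, ?_⟩
    · simpa using rootedCycleDensity_eq_of_forall_card_eq
        (card_rootedCycle_three_completeEquipartiteGraph_two (r + 1))
    · simpa using rootedCycleDensity_eq_of_forall_card_eq
        (card_rootedCycle_four_completeEquipartiteGraph_two (r + 1))

theorem extremePoint_eq_sum_descFactorial (r l : ℕ) :
    extremePoint r l = (((∑ i ∈ Finset.range l, ((r + i) / l).descFactorial 2 : ℕ) : ℝ) / 6,
      ((∑ i ∈ Finset.range l, ((r + i) / l).descFactorial 3 : ℕ) : ℝ) / 8) := by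
  have hdesc (n : ℕ) : n.descFactorial 3 = 2 * (n * (n - 1).choose 2) := by
    cases n with
    | zero => rfl
    | succ n =>
      rw [Nat.succ_descFactorial_succ, Nat.descFactorial_eq_factorial_mul_choose,
        Nat.add_sub_cancel, Nat.factorial_two]
      ring
  rw [extremePoint]
  simp only [hdesc, Nat.descFactorial_eq_factorial_mul_choose, ← Finset.mul_sum, Nat.factorial_two]
  push_cast
  ext <;> dsimp only <;> ring

theorem extremeSet_subset_image_ratPoint (r : ℕ) :
    extremeSet r ⊆ ratPoint ℝ '' (shortCycleDensities '' regularProfiles r) := by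
  intro p hp
  suffices ∃ ρ ∈ regularProfiles r, ((ρ 3 : ℝ) / 6, (ρ 4 : ℝ) / 8) = p by
    obtain ⟨ρ, hρ, rfl⟩ := this
    exact ⟨_, ⟨ρ, hρ, rfl⟩, by simp [ratPoint, shortCycleDensities_apply]⟩
  rcases hp with rfl | ⟨l, hl, -, rfl⟩
  · obtain ⟨ρ, hρ, h₃, h₄⟩ := exists_mem_regularProfiles_mul_sub_one_sq r
    exact ⟨ρ, hρ, by simp [h₃, h₄]⟩
  · obtain ⟨ρ, hρ, h₃, h₄⟩ := exists_mem_regularProfiles_sum fun i : Fin l => (r + i) / l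
    simp only [Fin.sum_univ_eq_sum_range (fun i => (r + i) / l), sum_range_add_div r hl] at hρ
    refine ⟨ρ, hρ, ?_⟩
    rw [h₃, h₄, extremePoint_eq_sum_descFactorial, Rat.cast_natCast, Rat.cast_natCast,
      Fin.sum_univ_eq_sum_range fun i => ((r + i) / l).descFactorial 2,
      Fin.sum_univ_eq_sum_range fun i => ((r + i) / l).descFactorial 3]

theorem exists_mem_regularProfiles_of_mem_hull {r : ℕ} {x y : ℚ}
    (hxy : ((x : ℝ), (y : ℝ)) ∈ convexHull ℝ (extremeSet r)) :
    ∃ ρ ∈ regularProfiles r, ρ 3 / 6 = x ∧ ρ 4 / 8 = y := by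
  have hmem := mem_convexHull_of_ratPoint_mem_convexHull (p := (x, y))
    (convexHull_mono (extremeSet_subset_image_ratPoint r) hxy)
  rw [((convex_regularProfiles r).linear_image shortCycleDensities).convexHull_eq] at hmem
  obtain ⟨ρ, hρ, h⟩ := hmem
  rw [shortCycleDensities_apply] at h
  exact ⟨ρ, hρ, Prod.ext_iff.1 h⟩

theorem exists_regular_graph_of_rat_mem_hull_general (r : ℕ) (x y : ℚ)
    (hxy : ((x : ℝ), (y : ℝ)) ∈ convexHull ℝ (extremeSet r)) :
    ∃ (V : Type) (G : SimpleGraph V), Finite V ∧ Nonempty V ∧ IsRegularGraph G r ∧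
      cycleDensity G 3 = x ∧ cycleDensity G 4 = y := by
  obtain ⟨_, ⟨V, G, _, _, hG, rfl⟩, rfl, rfl⟩ := exists_mem_regularProfiles_of_mem_hull hxy
  refine ⟨_, G □ (⊥ : SimpleGraph (Fin 24)), inferInstance, inferInstance,
    isRegularGraph_boxProd_bot hG, ?_, ?_⟩
  · rw [cycleDensity_boxProd_bot G (by simp)]
    norm_num
  · rw [cycleDensity_boxProd_bot G (by simp)]
    norm_num

/-- Every point of `Q^r` with rational coordinates is realized as `(d₃(G), d₄(G))` for some
nonempty finite simple `r`-regular graph `G`. -/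
theorem exists_regular_graph_of_rat_mem_hull (r : ℕ) (hr : 3 ≤ r) (x y : ℝ)
    (hx : ∃ qx : ℚ, (qx : ℝ) = x) (hy : ∃ qy : ℚ, (qy : ℝ) = y)
    (hxy : (x, y) ∈ convexHull ℝ (extremeSet r)) :
    ∃ (V : Type) (G : SimpleGraph V), Finite V ∧ Nonempty V ∧ IsRegularGraph G r ∧
      cycleDensity G 3 = x ∧ cycleDensity G 4 = y := by
  obtain ⟨⟨x, rfl⟩, ⟨y, rfl⟩⟩ := And.intro hx hy
  exact exists_regular_graph_of_rat_mem_hull_general r x y hxy
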